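/- arXiv:1009.3430 — 3 statements merged into one kernel-verified Lean document; each statement's English description precedes it below -/
import Mathlib

section
/- Let G and G' be simple undirected graphs on the same vertex set {1, …, N} with adjacency matrices A and A', such that every edge of G is an edge of G' and G' has at least one edge not in G (i.e., the edge set of G is strictly contained in that of G'). Then trace(exp(A)) < trace(exp(A')); equivalently, the natural connectivity strictly increases under the addition of edges. -/
open scoped Nat in
theorem hasSum_trace_exp_aux {N : ℕ} (A : Matrix (Fin N) (Fin N) ℝ) :
    HasSum (fun n : ℕ => ((n ! : ℝ)⁻¹) * (A ^ n).trace) (NormedSpace.exp A).trace := by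
  have key : HasSum (fun n : ℕ => ((n ! : ℝ)⁻¹) • A ^ n) (NormedSpace.exp A) := by
    letI : NormedRing (Matrix (Fin N) (Fin N) ℝ) := Matrix.linftyOpNormedRing
    letI : NormedAlgebra ℝ (Matrix (Fin N) (Fin N) ℝ) := Matrix.linftyOpNormedAlgebra
    exact NormedSpace.exp_series_hasSum_exp' (𝕂 := ℝ) A
  have h2 := key.map (Matrix.traceAddMonoidHom (Fin N) ℝ)
    (show Continuous fun M : Matrix (Fin N) (Fin N) ℝ => M.trace from
      continuous_id.matrix_trace)
  have e : (fun n : ℕ => ((n ! : ℝ)⁻¹) * (A ^ n).trace) =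
      (Matrix.traceAddMonoidHom (Fin N) ℝ) ∘ (fun n : ℕ => ((n ! : ℝ)⁻¹) • A ^ n) := by
    funext n
    simp [Matrix.trace_smul]
  rw [e]
  exact h2

theorem pow_entry_mono_aux {N : ℕ} {A B : Matrix (Fin N) (Fin N) ℝ}
    (h0 : ∀ i j, 0 ≤ A i j) (hAB : ∀ i j, A i j ≤ B i j) (n : ℕ) :
    ∀ i j, 0 ≤ (A ^ n) i j ∧ (A ^ n) i j ≤ (B ^ n) i j := by
  induction n with
  | zero =>
    intro i j
    simp only [pow_zero, le_refl, and_true, Matrix.one_apply]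
    split_ifs <;> norm_num
  | succ n ih =>
    intro i j
    simp only [pow_succ, Matrix.mul_apply]
    refine ⟨Finset.sum_nonneg fun k _ => mul_nonneg (ih i k).1 (h0 k j), ?_⟩
    exact Finset.sum_le_sum fun k _ =>
      mul_le_mul (ih i k).2 (hAB k j) (h0 k j) ((ih i k).1.trans (ih i k).2)

/-- If `G` and `G'` are simple graphs on the vertex set `Fin N` such that the edge set
of `G` is strictly contained in that of `G'`, then `trace (exp A) < trace (exp A')`
for their adjacency matrices, i.e. the natural connectivity strictly increases
under the addition of edges. -/
theorem trace_exp_adjMatrix_strict_mono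
    (N : ℕ) (G G' : SimpleGraph (Fin N))
    [DecidableRel G.Adj] [DecidableRel G'.Adj]
    (h : G.edgeSet ⊂ G'.edgeSet) :
    (NormedSpace.exp (G.adjMatrix ℝ)).trace <
      (NormedSpace.exp (G'.adjMatrix ℝ)).trace := by
  have hlt : G < G' := SimpleGraph.edgeSet_ssubset_edgeSet.mp h
  have h0 : ∀ i j, 0 ≤ G.adjMatrix ℝ i j := by
    intro i j
    simp only [SimpleGraph.adjMatrix_apply]
    split_ifs <;> norm_num
  have hAB : ∀ i j, G.adjMatrix ℝ i j ≤ G'.adjMatrix ℝ i j := by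
    intro i j
    simp only [SimpleGraph.adjMatrix_apply]
    by_cases hG : G.Adj i j
    · simp [hG, hlt.le hG]
    · simp only [hG, if_false]
      split_ifs <;> norm_num
  obtain ⟨a, b, hab', hab⟩ : ∃ a b, G'.Adj a b ∧ ¬ G.Adj a b := by
    by_contra! hc
    exact hlt.not_ge fun a b hh => hc a b hh
  refine hasSum_lt (i := 2) ?_ ?_ (hasSum_trace_exp_aux _) (hasSum_trace_exp_aux _)
  · intro n
    refine mul_le_mul_of_nonneg_left ?_ (by positivity)
    exact Finset.sum_le_sum fun i _ => (pow_entry_mono_aux h0 hAB n i i).2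
  · refine mul_lt_mul_of_pos_left ?_ (by positivity)
    refine Finset.sum_lt_sum (fun i _ => (pow_entry_mono_aux h0 hAB 2 i i).2)
      ⟨a, Finset.mem_univ _, ?_⟩
    simp only [Matrix.diag_apply, pow_two, Matrix.mul_apply]
    refine Finset.sum_lt_sum (fun k _ => mul_le_mul (hAB _ _) (hAB _ _) (h0 _ _)
      ((h0 _ _).trans (hAB _ _))) ⟨b, Finset.mem_univ _, ?_⟩
    simp [SimpleGraph.adjMatrix_apply, hab, hab', hab'.symm]
end

section
/- Fix a real number N > 0 and define, for p ∈ (0,1), R(p) = 2√(N p (1 − p)) and g(p) = N √(2/π) · e^{R(p) − N p} / R(p)^{3/2}. Then g is strictly decreasing on the set {p ∈ (0,1) : N p (1 − p) > 1}, i.e., for all p₁ < p₂ in (0,1) with N p₁(1 − p₁) > 1 and N p₂(1 − p₂) > 1, one has g(p₂) < g(p₁). -/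
open Real

/-- For fixed `N > 0`, the function
`g(p) = N √(2/π) · e^{R(p) − N p} / R(p)^{3/2}`, with `R(p) = 2√(N p (1 − p))`,
is strictly decreasing on `{p ∈ (0,1) : N p (1 − p) > 1}`. -/
theorem correction_term_strictAntiOn (N : ℝ) (hN : 0 < N) :
    StrictAntiOn
      (fun p : ℝ =>
        N * Real.sqrt (2 / π) *
            Real.exp (2 * Real.sqrt (N * p * (1 - p)) - N * p) /
          (2 * Real.sqrt (N * p * (1 - p))) ^ ((3 : ℝ) / 2))
      {p : ℝ | 0 < p ∧ p < 1 ∧ 1 < N * p * (1 - p)} := by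
  rintro p ⟨hp0, hp1, hp⟩ q ⟨hq0, hq1, hq⟩ hpq
  have hs : 1 < √(N * p * (1 - p)) := by
    rw [Real.lt_sqrt (by norm_num)]; simpa using hp
  have ht : 1 < √(N * q * (1 - q)) := by
    rw [Real.lt_sqrt (by norm_num)]; simpa using hq
  have hs2 : √(N * p * (1 - p)) ^ 2 = N * p * (1 - p) := Real.sq_sqrt (by linarith)
  have ht2 : √(N * q * (1 - q)) ^ 2 = N * q * (1 - q) := Real.sq_sqrt (by linarith)
  show N * √(2 / π) * Real.exp (2 * √(N * q * (1 - q)) - N * q) /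
      (2 * √(N * q * (1 - q))) ^ ((3 : ℝ) / 2) <
    N * √(2 / π) * Real.exp (2 * √(N * p * (1 - p)) - N * p) /
      (2 * √(N * p * (1 - p))) ^ ((3 : ℝ) / 2)
  generalize √(N * p * (1 - p)) = s at *
  generalize √(N * q * (1 - q)) = t at *
  have hc : 0 < N * √(2 / π) := by positivity
  rw [Real.rpow_def_of_pos (by linarith), Real.rpow_def_of_pos (by linarith),
    mul_div_assoc, mul_div_assoc, ← Real.exp_sub, ← Real.exp_sub]
  apply mul_lt_mul_of_pos_left _ hc
  apply Real.exp_lt_exp.mpr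
  rw [Real.log_mul (by norm_num) (by linarith), Real.log_mul (by norm_num) (by linarith)]
  have hd : 0 < N * (q - p) := mul_pos hN (by linarith)
  rcases le_total s t with h | h
  · have hl : Real.log s ≤ Real.log t := Real.log_le_log (by linarith) h
    have h1 : t ^ 2 - s ^ 2 < N * (q - p) := by
      rw [hs2, ht2]
      nlinarith [mul_pos hd (by linarith : 0 < p + q)]
    nlinarith [mul_nonneg (sub_nonneg.2 h) (by linarith : 0 ≤ t + s - 2)]
  · have hl : Real.log s - Real.log t ≤ s - t := by
      rw [← Real.log_div (by linarith) (by linarith)]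
      have h1 := Real.log_le_sub_one_of_pos (show 0 < s / t by apply div_pos <;> linarith)
      have h2 : s / t - 1 ≤ s - t := by
        rw [div_sub_one (by linarith)]
        exact div_le_self (by linarith) ht.le
      linarith
    linarith
end

section
/- Fix ε ∈ (0, 1) and define, for real N and p ∈ (0,1), R(N,p) = 2√(N p (1 − p)) and g_N(p) = N √(2/π) · e^{R(N,p) − N p} / R(N,p)^{3/2}. Then sup { g_N(p) : N^{ε−1} ln N ≤ p ≤ 1 − N^{ε−1} ln N } → 0 as N → ∞. In particular, for every δ > 0 there exists N₀ such that for all N ≥ N₀ and every p with N^{ε−1} ln N ≤ p ≤ 1 − N^{ε−1} ln N, one has g_N(p) < δ. -/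
open Real Filter

theorem aux_bound (ε : ℝ) (hε : 0 < ε) :
    ∃ N₀ : ℝ, 0 < N₀ ∧ ∀ N : ℝ, N₀ ≤ N →
      ∀ p ∈ Set.Icc (N ^ (ε - 1) * Real.log N) (1 - N ^ (ε - 1) * Real.log N),
        0 ≤ N * Real.sqrt (2 / π) *
            Real.exp (2 * Real.sqrt (N * p * (1 - p)) - N * p) /
          (2 * Real.sqrt (N * p * (1 - p))) ^ ((3 : ℝ) / 2) ∧
        N * Real.sqrt (2 / π) *
            Real.exp (2 * Real.sqrt (N * p * (1 - p)) - N * p) /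
          (2 * Real.sqrt (N * p * (1 - p))) ^ ((3 : ℝ) / 2) ≤ Real.exp 2 / N := by
  obtain ⟨M, hM⟩ := eventually_atTop.1 ((tendsto_rpow_atTop hε).eventually_ge_atTop 4)
  refine ⟨max M (Real.exp 1), lt_max_of_lt_right (Real.exp_pos 1), ?_⟩
  rintro N hN p ⟨hp1, hp2⟩
  have hNM : 4 ≤ N ^ ε := hM N (le_trans (le_max_left _ _) hN)
  have hNe : Real.exp 1 ≤ N := le_trans (le_max_right _ _) hN
  have hN0 : 0 < N := lt_of_lt_of_le (Real.exp_pos 1) hNe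
  have hlog : 1 ≤ Real.log N := (Real.le_log_iff_exp_le hN0).2 hNe
  set a := N ^ (ε - 1) * Real.log N with ha
  have hNa : N * a = N ^ ε * Real.log N := by
    rw [ha, Real.rpow_sub_one hN0.ne']
    field_simp
  have ha0 : 0 < a := by positivity
  have hNa4 : 4 * Real.log N ≤ N * a := by
    rw [hNa]; exact mul_le_mul_of_nonneg_right hNM (by linarith)
  have hpa : a / 2 ≤ p * (1 - p) := by
    nlinarith [mul_nonneg (sub_nonneg.2 hp1) (sub_nonneg.2 hp2)]
  have hy2 : 2 ≤ N * p * (1 - p) := by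
    have := mul_le_mul_of_nonneg_left hpa hN0.le
    nlinarith
  have hx : N * a ≤ N * p := mul_le_mul_of_nonneg_left hp1 hN0.le
  have hyx : N * p * (1 - p) ≤ N * p := by
    have h : 0 ≤ N * p * p := by
      have : 0 < p := lt_of_lt_of_le ha0 hp1
      positivity
    nlinarith
  set y := N * p * (1 - p) with hy
  have hs := Real.sq_sqrt (show (0:ℝ) ≤ y by linarith)
  have hs1 : 1 ≤ Real.sqrt y := Real.one_le_sqrt.2 (by linarith)
  have hex : 2 * Real.sqrt y - N * p ≤ 2 - 2 * Real.log N := by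
    nlinarith [sq_nonneg (Real.sqrt y - 2)]
  have hexp : Real.exp (2 * Real.sqrt y - N * p) ≤ Real.exp 2 / N ^ 2 := by
    refine (Real.exp_le_exp.2 hex).trans (le_of_eq ?_)
    rw [Real.exp_sub, two_mul (Real.log N), Real.exp_add, Real.exp_log hN0, sq]
  have hR : 1 ≤ (2 * Real.sqrt y) ^ ((3 : ℝ) / 2) :=
    Real.one_le_rpow (by linarith) (by norm_num)
  have hpi : Real.sqrt (2 / π) ≤ 1 := by
    rw [Real.sqrt_le_one, div_le_one Real.pi_pos]
    linarith [Real.pi_gt_three]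
  refine ⟨by positivity, ?_⟩
  refine (div_le_self (by positivity) hR).trans ?_
  calc N * Real.sqrt (2 / π) * Real.exp (2 * Real.sqrt y - N * p)
      ≤ N * 1 * (Real.exp 2 / N ^ 2) := by gcongr
    _ = Real.exp 2 / N := by field_simp

/-- Fix `ε ∈ (0,1)` and let `g_N(p) = N √(2/π) e^{R − N p} / R^{3/2}` with
`R = R(N,p) = 2√(N p (1 − p))`. Then
`sup { g_N(p) : N^{ε−1} ln N ≤ p ≤ 1 − N^{ε−1} ln N } → 0` as `N → ∞`.
In particular, for every `δ > 0` there is `N₀` such that for all `N ≥ N₀` and every `p`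
in that interval, `g_N(p) < δ`. -/
theorem correction_term_sup_tendsto_zero (ε : ℝ) (hε : 0 < ε) (hε1 : ε < 1) :
    Tendsto
      (fun N : ℝ =>
        sSup
          ((fun p : ℝ =>
              N * Real.sqrt (2 / π) *
                  Real.exp (2 * Real.sqrt (N * p * (1 - p)) - N * p) /
                (2 * Real.sqrt (N * p * (1 - p))) ^ ((3 : ℝ) / 2)) ''
            Set.Icc (N ^ (ε - 1) * Real.log N) (1 - N ^ (ε - 1) * Real.log N)))
      atTop (nhds 0) ∧
    ∀ δ : ℝ, 0 < δ → ∃ N₀ : ℝ, ∀ N : ℝ, N₀ ≤ N →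
      ∀ p ∈ Set.Icc (N ^ (ε - 1) * Real.log N) (1 - N ^ (ε - 1) * Real.log N),
        N * Real.sqrt (2 / π) *
            Real.exp (2 * Real.sqrt (N * p * (1 - p)) - N * p) /
          (2 * Real.sqrt (N * p * (1 - p))) ^ ((3 : ℝ) / 2) < δ := by
  obtain ⟨N₀, hN₀, h⟩ := aux_bound ε hε
  have hlim : Tendsto (fun N : ℝ => Real.exp 2 / N) atTop (nhds 0) :=
    tendsto_const_nhds.div_atTop tendsto_id
  refine ⟨?_, ?_⟩
  · refine tendsto_of_tendsto_of_tendsto_of_le_of_le' tendsto_const_nhds hlim ?_ ?_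
    · filter_upwards [eventually_ge_atTop N₀] with N hN
      apply Real.sSup_nonneg
      rintro _ ⟨p, hp, rfl⟩
      exact (h N hN p hp).1
    · filter_upwards [eventually_ge_atTop N₀] with N hN
      apply Real.sSup_le
      · rintro _ ⟨p, hp, rfl⟩
        exact (h N hN p hp).2
      · have : 0 < N := lt_of_lt_of_le hN₀ hN
        positivity
  · intro δ hδ
    obtain ⟨M, hM⟩ := eventually_atTop.1 (hlim.eventually_lt_const hδ)
    refine ⟨max N₀ M, fun N hN p hp => ?_⟩
    exact lt_of_le_of_lt (h N ((le_max_left _ _).trans hN) p hp).2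
      (hM N ((le_max_right _ _).trans hN))
end
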